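/- arXiv:1502.04429 — 2 statements merged into one kernel-verified Lean document; each statement's English description precedes it below -/
import Mathlib

section
/- Let G be the group of all increasing bijections from ℚ to itself, with composition as the group operation and with the topology of pointwise convergence (induced from the product topology on ℚ^ℚ with ℚ discrete). Then G is extremely amenable: every continuous action of G on a nonempty compact Hausdorff space has a fixed point. -/
/-- A topological group `G` is *extremely amenable* if every continuous action of `G` on a
nonempty compact Hausdorff space has a fixed point. -/
def ExtremelyAmenable (G : Type) [Group G] [TopologicalSpace G] : Prop :=
  ∀ (K : Type) [TopologicalSpace K] [CompactSpace K] [T2Space K] [Nonempty K]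
    [MulAction G K] [ContinuousSMul G K], ∃ x : K, ∀ g : G, g • x = x

/-- The group of increasing bijections of `ℚ` (i.e. order isomorphisms `ℚ ≃o ℚ`),
with composition as the group operation. -/
instance : Group (ℚ ≃o ℚ) where
  mul f g := g.trans f
  one := OrderIso.refl ℚ
  inv := OrderIso.symm
  mul_assoc _ _ _ := rfl
  one_mul _ := rfl
  mul_one _ := rfl
  inv_mul_cancel f := by
    ext x
    exact f.symm_apply_apply x

open Filter Topology Uniformity

/-- Iterated (Fubini) power of a filter, as a filter on lists of length `n`. -/
def listFilter (u : Filter ℚ) : ℕ → Filter (List ℚ)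
  | 0 => pure []
  | n + 1 => u.bind (fun a => (listFilter u n).map (fun l => a :: l))

theorem listFilter_succ_iff (u : Filter ℚ) (n : ℕ) (P : List ℚ → Prop) :
    (∀ᶠ l in listFilter u (n + 1), P l) ↔ ∀ᶠ a in u, ∀ᶠ l in listFilter u n, P (a :: l) := by
  rw [listFilter, Filter.eventually_bind]
  simp only [Filter.eventually_map]

theorem listFilter_zero_iff (u : Filter ℚ) (P : List ℚ → Prop) :
    (∀ᶠ l in listFilter u 0, P l) ↔ P [] := by
  rw [listFilter, Filter.eventually_pure]

theorem listFilter_exists (u : Filter ℚ) [u.NeBot] (n : ℕ) (P : List ℚ → Prop)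
    (h : ∀ᶠ l in listFilter u n, P l) : ∃ l, P l := by
  induction n generalizing P with
  | zero => exact ⟨_, (listFilter_zero_iff u P).1 h⟩
  | succ n ih =>
    obtain ⟨a, ha⟩ := ((listFilter_succ_iff u n P).1 h).exists
    obtain ⟨l, hl⟩ := ih _ ha
    exact ⟨_, hl⟩

theorem listFilter_length (u : Filter ℚ) (n : ℕ) : ∀ᶠ l in listFilter u n, l.length = n := by
  induction n with
  | zero => rw [listFilter_zero_iff]; rfl
  | succ n ih =>
    rw [listFilter_succ_iff]
    refine Eventually.of_forall fun a => ?_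
    filter_upwards [ih] with l hl
    simp [hl]

theorem listFilter_gt (u : Filter ℚ) (hu : u ≤ atTop) (a : ℚ) (n : ℕ) :
    ∀ᶠ l in listFilter u n, ∀ b ∈ l, a < b := by
  induction n with
  | zero => rw [listFilter_zero_iff]; simp
  | succ n ih =>
    rw [listFilter_succ_iff]
    filter_upwards [hu (eventually_gt_atTop a)] with b hb
    filter_upwards [ih] with l hl
    simpa using ⟨hb, hl⟩

theorem listFilter_sorted (u : Filter ℚ) (hu : u ≤ atTop) (n : ℕ) :
    ∀ᶠ l in listFilter u n, l.Pairwise (· < ·) := by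
  induction n with
  | zero => rw [listFilter_zero_iff]; simp
  | succ n ih =>
    rw [listFilter_succ_iff]
    refine Eventually.of_forall fun a => ?_
    filter_upwards [ih, listFilter_gt u hu a n] with l hl h2
    exact List.pairwise_cons.2 ⟨h2, hl⟩

/-- The Ramsey-type property. -/
theorem listFilter_ramsey (u : Filter ℚ) (N n : ℕ) (P : List ℚ → Prop)
    (h : ∀ᶠ l in listFilter u n, P l) :
    ∀ᶠ L in listFilter u N, ∀ l, l.Sublist L → l.length = n → P l := by
  induction N generalizing n P with
  | zero =>
    rw [listFilter_zero_iff]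
    intro l hl hn
    rw [List.sublist_nil] at hl
    subst hl
    simp at hn
    subst hn
    exact (listFilter_zero_iff u P).1 h
  | succ N ih =>
    rw [listFilter_succ_iff]
    cases n with
    | zero =>
      refine Eventually.of_forall fun a => Eventually.of_forall fun l s _ hs => ?_
      rw [List.length_eq_zero_iff] at hs
      subst hs
      exact (listFilter_zero_iff u P).1 h
    | succ n =>
      filter_upwards [(listFilter_succ_iff u n P).1 h] with a ha
      filter_upwards [ih _ _ h, ih _ _ ha] with L h1 h2 l hl hn
      rw [List.sublist_cons_iff] at hl
      rcases hl with hl | ⟨r, rfl, hr⟩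
      · exact h1 l hl hn
      · exact h2 r hr (by simpa using hn)

theorem listFilter_lim (u : Ultrafilter ℚ) {K : Type} [TopologicalSpace K] [CompactSpace K]
    (n : ℕ) (c : List ℚ → K) :
    ∃ y, ∀ W ∈ 𝓝 y, ∀ᶠ l in listFilter (u : Filter ℚ) n, c l ∈ W := by
  induction n generalizing c with
  | zero =>
    refine ⟨c [], fun W hW => ?_⟩
    rw [listFilter_zero_iff]
    exact mem_of_mem_nhds hW
  | succ n ih =>
    choose y hy using fun a => ih (fun l => c (a :: l))
    obtain ⟨z, -, hz⟩ := isCompact_univ.ultrafilter_le_nhds (u.map y) (by simp)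
    refine ⟨z, fun W hW => ?_⟩
    rw [listFilter_succ_iff]
    obtain ⟨O, hOW, hO, hzO⟩ := mem_nhds_iff.1 hW
    have h1 : ∀ᶠ a in (u : Filter ℚ), y a ∈ O := hz (hO.mem_nhds hzO)
    filter_upwards [h1] with a ha
    filter_upwards [hy a O (hO.mem_nhds ha)] with l hl
    exact hOW hl

/-- Scaling below `b`. -/
theorem exists_scale (b p q : ℚ) (hp : p < b) (hq : q < b) :
    ∃ h : ℚ ≃o ℚ, h p = q ∧ ∀ x, b ≤ x → h x = x := by
  let f : ℚ → ℚ → ℚ := fun c x => if x < b then b - (b - x) * c else x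
  have key : ∀ c d : ℚ, 0 < c → c * d = 1 → ∀ x, f d (f c x) = x := by
    intro c d hc hcd x
    by_cases hx : x < b
    · have : b - (b - x) * c < b := by nlinarith [mul_pos (sub_pos.2 hx) hc]
      simp only [f, if_pos hx, if_pos this]
      linear_combination (x - b) * hcd
    · simp only [f, if_neg hx]
  have mono : ∀ c : ℚ, 0 < c → StrictMono (f c) := by
    intro c hc x y hxy
    have hm := mul_pos (sub_pos.2 hxy) hc
    by_cases hy : y < b
    · have hx := hxy.trans hy
      simp only [f, if_pos hx, if_pos hy]
      nlinarith
    · by_cases hx : x < b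
      · simp only [f, if_pos hx, if_neg hy]
        nlinarith [mul_pos (sub_pos.2 hx) hc]
      · simpa only [f, if_neg hx, if_neg hy]
  have h1 : 0 < b - p := sub_pos.2 hp
  have h2 : 0 < b - q := sub_pos.2 hq
  have hc : 0 < (b - q) / (b - p) := div_pos h2 h1
  have hd : 0 < (b - p) / (b - q) := div_pos h1 h2
  have hcd : (b - q) / (b - p) * ((b - p) / (b - q)) = 1 := by field_simp
  refine ⟨(mono _ hc).orderIsoOfRightInverse _ (f ((b - p) / (b - q)))
    (key _ _ hd (by rw [mul_comm]; exact hcd)), ?_, ?_⟩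
  · show f _ p = q
    simp only [f, if_pos hp]
    field_simp
    ring
  · intro x hx
    show f _ x = x
    simp only [f, if_neg (not_lt.2 hx)]

/-- Homogeneity of `ℚ`. -/
theorem exists_map_eq (A B : List ℚ) (hA : A.Pairwise (· < ·)) (hB : B.Pairwise (· < ·))
    (hl : A.length = B.length) : ∃ g : ℚ ≃o ℚ, A.map g = B := by
  induction A generalizing B with
  | nil =>
    cases B with
    | nil => exact ⟨OrderIso.refl ℚ, rfl⟩
    | cons b B => simp at hl
  | cons a A ih =>
    cases B with
    | nil => simp at hl
    | cons b B =>
      rw [List.pairwise_cons] at hA hB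
      obtain ⟨g, hg⟩ := ih B hA.2 hB.2 (by simpa using hl)
      have : ∃ t, g a < t ∧ b < t ∧ ∀ x ∈ A, t ≤ g x := by
        cases A with
        | nil => exact ⟨max (g a) b + 1, (le_max_left _ _).trans_lt (lt_add_one _),
            (le_max_right _ _).trans_lt (lt_add_one _), by simp⟩
        | cons a' A =>
          refine ⟨g a', g.strictMono (hA.1 a' (by simp)), ?_, ?_⟩
          · apply hB.1
            rw [← hg]; simp
          · intro x hx
            apply g.monotone
            rcases List.mem_cons.1 hx with rfl | hx
            · exact le_rfl
            · exact ((List.pairwise_cons.1 hA.2).1 x hx).le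
      obtain ⟨t, h1, h2, h3⟩ := this
      obtain ⟨h, hh1, hh2⟩ := exists_scale t _ _ h1 h2
      refine ⟨g.trans h, ?_⟩
      rw [List.map_cons, ← hg]
      congr 1
      apply List.map_congr_left
      intro x hx
      exact hh2 _ (h3 x hx)

theorem exists_almost_fixed [TopologicalSpace (ℚ ≃o ℚ)]
    (hn : ∀ s ∈ 𝓝 (1 : ℚ ≃o ℚ), ∃ F : Finset ℚ, ∀ g : ℚ ≃o ℚ, (∀ q ∈ F, g q = q) → g ∈ s)
    (K : Type) [UniformSpace K] [CompactSpace K] [Nonempty K]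
    [MulAction (ℚ ≃o ℚ) K] [ContinuousSMul (ℚ ≃o ℚ) K]
    (U : Set (K × K)) (hU : U ∈ 𝓤 K) (H : Finset (ℚ ≃o ℚ)) :
    ∃ y : K, ∀ h ∈ H, (h • y, y) ∈ U := by
  classical
  obtain ⟨V, hV, hVs, hVU⟩ := comp_symm_mem_uniformity_sets hU
  obtain ⟨W, hW, hWs, hWV⟩ := comp_symm_mem_uniformity_sets hV
  have h1 : ∀ᶠ g in 𝓝 (1 : ℚ ≃o ℚ), ∀ y ∈ (Set.univ : Set K), (g • y, y) ∈ W := by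
    refine isCompact_univ.eventually_forall_of_forall_eventually fun y _ => ?_
    have hc : Continuous (fun z : (ℚ ≃o ℚ) × K => (z.1 • z.2, z.2)) := by fun_prop
    have := hc.continuousAt (x := ((1 : ℚ ≃o ℚ), y))
    refine this ?_
    simp only [one_smul]
    exact nhds_le_uniformity y hW
  obtain ⟨F, hF⟩ := hn _ h1
  have hF : ∀ g : ℚ ≃o ℚ, (∀ q ∈ F, g q = q) → ∀ y : K, (g • y, y) ∈ W :=
    fun g hg y => hF g hg y trivial
  obtain ⟨x⟩ := ‹Nonempty K›
  let u : Ultrafilter ℚ := Ultrafilter.of atTop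
  have hu : (u : Filter ℚ) ≤ atTop := Ultrafilter.of_le _
  let FL : List ℚ := F.sort (· ≤ ·)
  have hc : ∀ l : List ℚ, ∃ y : K, ∀ φ : ℚ ≃o ℚ, FL.map φ = l → (y, φ⁻¹ • x) ∈ W := by
    intro l
    by_cases hl : ∃ φ : ℚ ≃o ℚ, FL.map φ = l
    · obtain ⟨φ, hφ⟩ := hl
      refine ⟨φ⁻¹ • x, fun ψ hψ => ?_⟩
      have : φ⁻¹ • x = (φ⁻¹ * ψ) • (ψ⁻¹ • x) := by simp [smul_smul]
      rw [this]
      apply hF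
      intro q hq
      have : φ q = ψ q := List.map_inj_left.1 (hφ.trans hψ.symm) q (by simpa [FL] using hq)
      show φ.symm (ψ q) = q
      rw [← this, φ.symm_apply_apply]
    · exact ⟨x, fun φ hφ => (hl ⟨φ, hφ⟩).elim⟩
  choose c hc using hc
  obtain ⟨z, hz⟩ := listFilter_lim u FL.length c
  have hz := hz _ (UniformSpace.ball_mem_nhds z hW)
  let E : Finset ℚ := F ∪ H.biUnion (fun h => F.image h.symm)
  let EL : List ℚ := E.sort (· ≤ ·)
  obtain ⟨L, ⟨hL1, hL2⟩, hL3⟩ := listFilter_exists u EL.length _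
    (((listFilter_length u EL.length).and (listFilter_sorted u hu EL.length)).and
      (listFilter_ramsey u EL.length _ _ hz))
  have sortE : EL.Pairwise (· < ·) := (Finset.sortedLT_sort E).pairwise
  have sortF : FL.Pairwise (· < ·) := (Finset.sortedLT_sort F).pairwise
  obtain ⟨φ, hφ⟩ := exists_map_eq EL L sortE hL2 hL1.symm
  have main : ∀ h : ℚ ≃o ℚ, (∀ q ∈ F, h.symm q ∈ E) → (z, h • (φ⁻¹ • x)) ∈ V := by
    intro h hh
    have hs : (FL.map h.symm).Sublist EL := by
      have hp : (FL.map h.symm).Pairwise (· < ·) :=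
        List.pairwise_map.2 (sortF.imp fun hab => h.symm.strictMono hab)
      refine List.sublist_of_subperm_of_pairwise (r := (· < ·)) ?_ hp sortE
      refine List.subperm_of_subset (hp.imp ne_of_lt) ?_
      intro q hq
      obtain ⟨p, hp, rfl⟩ := List.mem_map.1 hq
      simpa [EL] using hh p (by simpa [FL] using hp)
    have h3 := hL3 _ (hφ ▸ hs.map φ) (by simp)
    have h4 := hc ((FL.map h.symm).map φ) (φ * h⁻¹) (by
      rw [List.map_map]; rfl)
    have : h • (φ⁻¹ • x) = (φ * h⁻¹)⁻¹ • x := by simp [smul_smul]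
    rw [this]
    exact hWV ⟨_, h3, h4⟩
  refine ⟨φ⁻¹ • x, fun h hh => hVU ⟨z, ?_, ?_⟩⟩
  · apply hVs.symm
    exact main h fun q hq => by
      simp only [E, Finset.mem_union, Finset.mem_biUnion, Finset.mem_image]
      exact Or.inr ⟨h, hh, q, hq, rfl⟩
  · have := main 1 fun q hq => Finset.mem_union_left _ hq
    rwa [one_smul] at this

theorem nhds_one_aux (s : Set (ℚ ≃o ℚ))
    (hs : s ∈ @nhds _ (TopologicalSpace.induced (fun (f : ℚ ≃o ℚ) => (f : ℚ → ℚ))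
        (@Pi.topologicalSpace ℚ (fun _ => ℚ) (fun _ => ⊥))) (1 : ℚ ≃o ℚ)) :
    ∃ F : Finset ℚ, ∀ g : ℚ ≃o ℚ, (∀ q ∈ F, g q = q) → g ∈ s := by
  letI : TopologicalSpace ℚ := ⊥
  haveI : DiscreteTopology ℚ := ⟨rfl⟩
  rw [nhds_induced, Filter.mem_comap, ] at hs
  obtain ⟨t, ht, hts⟩ := hs
  rw [nhds_pi, Filter.mem_pi] at ht
  obtain ⟨I, hI, t', ht', hsub⟩ := ht
  refine ⟨hI.toFinset, fun g hg => hts (hsub ?_)⟩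
  intro i hi
  have := hg i (by simpa using hi)
  show g i ∈ t' i
  rw [this]
  exact mem_of_mem_nhds (ht' i)

/-- **Pestov's theorem**: the group of all increasing bijections of `ℚ`, with composition as
the group operation and the topology of pointwise convergence (`ℚ` discrete), is extremely
amenable. -/
theorem pestov_aut_Q_extremelyAmenable :
    letI : TopologicalSpace (ℚ ≃o ℚ) :=
      TopologicalSpace.induced (fun (f : ℚ ≃o ℚ) => (f : ℚ → ℚ))
        (@Pi.topologicalSpace ℚ (fun _ => ℚ) (fun _ => ⊥))
    ExtremelyAmenable (ℚ ≃o ℚ) := by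
  classical
  intro K _ _ _ _ _ _
  let τ : TopologicalSpace (ℚ ≃o ℚ) :=
      TopologicalSpace.induced (fun (f : ℚ ≃o ℚ) => (f : ℚ → ℚ))
        (@Pi.topologicalSpace ℚ (fun _ => ℚ) (fun _ => ⊥))
  letI : UniformSpace K := uniformSpaceOfCompactR1
  let S : (ℚ ≃o ℚ) × {U : Set (K × K) // U ∈ 𝓤 K ∧ IsClosed U} → Set K :=
    fun p => {y | (p.1 • y, y) ∈ p.2.1}
  have hcl : ∀ p, IsClosed (S p) := fun p =>
    p.2.2.2.preimage ((continuous_const_smul p.1).prodMk continuous_id)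
  have hne : (⋂ p, S p).Nonempty := by
    have := isCompact_univ.inter_iInter_nonempty S hcl (by
      intro T
      obtain ⟨y, hy⟩ := exists_almost_fixed nhds_one_aux K
        (⋂ p ∈ T, p.2.1) ((Filter.biInter_finset_mem T).2 fun p _ => p.2.2.1)
        (T.image Prod.fst)
      refine ⟨y, trivial, ?_⟩
      simp only [Set.mem_iInter] at hy ⊢
      intro p hp
      exact hy p.1 (Finset.mem_image_of_mem _ hp) p hp)
    simpa using this
  obtain ⟨y, hy⟩ := hne
  refine ⟨y, fun g => ?_⟩
  apply eq_of_uniformity_basis uniformity_hasBasis_closed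
  intro U hU
  exact Set.mem_iInter.1 hy (g, ⟨U, hU⟩)
end

section
/- Let H be a separable infinite-dimensional complex Hilbert space. The unitary group U(H) of H, i.e., the group of all unitary operators on H with composition as the group operation, equipped with the strong operator topology (the topology of pointwise convergence: the topology induced by the inclusion U(H) → H^H, where H^H carries the product of the norm topologies), is extremely amenable: every continuous action of U(H) on a nonempty compact Hausdorff space has a fixed point. -/
namespace GM
open MeasureTheory

/-- Lipschitz approximation by inf-convolution. -/
theorem lip_approx {α : Type*} (D : α → α → ℝ) (D0 : ∀ x, D x x = 0) (Dn : ∀ x y, 0 ≤ D x y)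
    (Ds : ∀ x y, D x y = D y x) (Dt : ∀ x y z, D x z ≤ D x y + D y z)
    (ψ : α → ℝ) (B η ε : ℝ) (hη : 0 < η) (hε : 0 ≤ ε) (hB : ∀ x, |ψ x| ≤ B)
    (hu : ∀ x y, D x y ≤ η → |ψ x - ψ y| ≤ ε) :
    ∃ φ : α → ℝ, (∀ x, |φ x - ψ x| ≤ ε) ∧ ∀ x y, |φ x - φ y| ≤ (2 * B / η) * D x y := by
  have hC : ∀ x : α, 0 ≤ 2 * B / η := fun x => by
    have := (abs_nonneg _).trans (hB x); positivity
  let φ : α → ℝ := fun x => ⨅ y, (ψ y + 2 * B / η * D x y)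
  have bdd : ∀ x, BddBelow (Set.range fun y => ψ y + 2 * B / η * D x y) := fun x => by
    refine ⟨-B, ?_⟩
    rintro _ ⟨y, rfl⟩
    have h1 := (abs_le.1 (hB y)).1
    have h2 := mul_nonneg (hC x) (Dn x y)
    simp only; linarith
  have key : ∀ x y, φ x - φ y ≤ (2 * B / η) * D x y := fun x y => by
    have : Nonempty α := ⟨x⟩
    have : φ x - (2 * B / η) * D x y ≤ φ y := by
      refine le_ciInf fun z => ?_
      have h1 : φ x ≤ ψ z + 2 * B / η * D x z := ciInf_le (bdd x) z
      have h2 := mul_le_mul_of_nonneg_left (Dt x y z) (hC x)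
      linarith
    linarith
  refine ⟨φ, fun x => ?_, fun x y => ?_⟩
  · have : Nonempty α := ⟨x⟩
    have h1 : φ x ≤ ψ x := by
      have : φ x ≤ ψ x + 2 * B / η * D x x := ciInf_le (bdd x) x
      rw [D0] at this; linarith
    have h2 : ψ x - ε ≤ φ x := by
      refine le_ciInf fun y => ?_
      by_cases h : D x y ≤ η
      · have := (abs_le.1 (hu x y h)).2
        have h2 := mul_nonneg (hC x) (Dn x y)
        linarith
      · push Not at h
        have h3 : 2 * B / η * η ≤ 2 * B / η * D x y := mul_le_mul_of_nonneg_left h.le (hC x)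
        rw [div_mul_cancel₀ _ hη.ne'] at h3
        have := (abs_le.1 (hB x)).2
        have := (abs_le.1 (hB y)).1
        linarith
    rw [abs_le]; constructor <;> linarith
  · rw [abs_le]
    have := key x y
    have := key y x
    rw [Ds y x] at this
    constructor <;> linarith

section conc
variable {X : Type*} [MetricSpace X] [CompactSpace X] [MeasurableSpace X] [BorelSpace X]

theorem cont_integrable {Y : Type*} [TopologicalSpace Y] [CompactSpace Y]
    [MeasurableSpace Y] [OpensMeasurableSpace Y] (μ : Measure Y) [IsProbabilityMeasure μ]
    (f : Y → ℝ) (hf : Continuous f) : Integrable f μ := by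
  have := BoundedContinuousFunction.integrable μ (BoundedContinuousFunction.mkOfCompact ⟨f, hf⟩)
  exact this

theorem variance_bound (μ : Measure X) [IsProbabilityMeasure μ] (c : ℝ) (N : ℕ) :
    ∀ f : (Fin N → X) → ℝ, Continuous f →
    (∀ g k x, |f g - f (Function.update g k x)| ≤ c) →
    ∃ m : ℝ, ∫ g, (f g - m) ^ 2 ∂(Measure.pi fun _ : Fin N => μ) ≤ N * c ^ 2 := by
  induction N with
  | zero =>
    intro f _ _
    refine ⟨f Fin.elim0, ?_⟩
    have : ∀ g : Fin 0 → X, f g - f Fin.elim0 = 0 := fun g => by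
      rw [Subsingleton.elim g Fin.elim0, sub_self]
    simp [this]
  | succ N ih =>
    intro f hf hd
    have hcons : Continuous fun p : (Fin N → X) × X => (Fin.cons p.2 p.1 : Fin (N+1) → X) := by
      fun_prop
    have hfc : Continuous fun p : (Fin N → X) × X => f (Fin.cons p.2 p.1) := hf.comp hcons
    let F : (Fin N → X) → ℝ := fun y => ∫ x, f (Fin.cons x y) ∂μ
    have hi : ∀ y, Integrable (fun x => f (Fin.cons x y : Fin (N+1) → X)) μ := fun y =>
      cont_integrable μ _ (by fun_prop)
    have hF : Continuous F := by
      have := continuous_parametric_integral_of_continuous (μ := μ)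
        (f := fun (y : Fin N → X) (x : X) => f (Fin.cons x y)) hfc (s := Set.univ) isCompact_univ
      simpa using this
    have hFd : ∀ g k x, |F g - F (Function.update g k x)| ≤ c := by
      intro g k x
      rw [← integral_sub (hi _) (hi _)]
      have := norm_integral_le_of_norm_le_const (μ := μ) (C := c)
        (f := fun a => f (Fin.cons a g : Fin (N+1) → X) - f (Fin.cons a (Function.update g k x)))
        (Filter.Eventually.of_forall fun a => by
          rw [Real.norm_eq_abs, Fin.cons_update]
          exact hd _ _ _)
      simpa using this
    obtain ⟨m, hm⟩ := ih F hF hFd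
    refine ⟨m, ?_⟩
    have hmp := (measurePreserving_piFinSuccAbove (fun _ : Fin (N+1) => μ) 0).symm
    rw [← hmp.integral_comp (MeasurableEquiv.measurableEmbedding _)]
    have e : ∀ p : X × (Fin N → X),
        (MeasurableEquiv.piFinSuccAbove (fun _ : Fin (N+1) => X) 0).symm p = Fin.cons p.1 p.2 := by
      intro p; simp [MeasurableEquiv.piFinSuccAbove, Fin.insertNthEquiv]
    simp only [e]
    have hint : Integrable (fun p : X × (Fin N → X) => (f (Fin.cons p.1 p.2) - m) ^ 2)
        (μ.prod (Measure.pi fun _ : Fin N => μ)) := cont_integrable _ _ (by fun_prop)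
    rw [integral_prod_symm _ hint]
    have hpt : ∀ y : Fin N → X, ∫ x, (f (Fin.cons x y) - m) ^ 2 ∂μ ≤ c ^ 2 + (F y - m) ^ 2 := by
      intro y
      have h1 : ∀ x, |f (Fin.cons x y) - F y| ≤ c := by
        intro x
        have := norm_integral_le_of_norm_le_const (μ := μ) (C := c)
          (f := fun a => f (Fin.cons x y : Fin (N+1) → X) - f (Fin.cons a y))
          (Filter.Eventually.of_forall fun a => by
            rw [Real.norm_eq_abs]
            have := hd (Fin.cons x y) 0 a
            rwa [Fin.update_cons_zero] at this)
        rw [integral_sub (integrable_const _) (hi y)] at this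
        simpa [F] using this
      have h2 : ∀ x, (f (Fin.cons x y) - m) ^ 2 =
          (f (Fin.cons x y) - F y) ^ 2 + (2 * (F y - m) * (f (Fin.cons x y) - F y)
            + (F y - m) ^ 2) := fun x => by ring
      simp only [h2]
      have i1 : Integrable (fun x => (f (Fin.cons x y : Fin (N+1) → X) - F y) ^ 2) μ :=
        cont_integrable μ _ (by fun_prop)
      have i2 : Integrable (fun x => 2 * (F y - m) * (f (Fin.cons x y : Fin (N+1) → X) - F y)) μ :=
        cont_integrable μ _ (by fun_prop)
      have i23 : Integrable (fun x => 2 * (F y - m) * (f (Fin.cons x y : Fin (N+1) → X) - F y)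
          + (F y - m) ^ 2) μ := cont_integrable μ _ (by fun_prop)
      rw [integral_add i1 i23, integral_add i2 (integrable_const _),
        integral_const_mul, integral_sub (hi y) (integrable_const _)]
      have i3 : ∫ x, (f (Fin.cons x y : Fin (N+1) → X) - F y) ^ 2 ∂μ ≤ ∫ x, c ^ 2 ∂μ := by
        refine integral_mono i1 (integrable_const _) fun x => ?_
        exact sq_le_sq' (abs_le.1 (h1 x)).1 (abs_le.1 (h1 x)).2
      simp only [integral_const, probReal_univ, one_smul] at i3 ⊢
      have : ∫ x, f (Fin.cons x y) ∂μ - F y = 0 := sub_self _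
      rw [this]; linarith
    have hF2 : Integrable (fun y => (F y - m) ^ 2) (Measure.pi fun _ : Fin N => μ) :=
      cont_integrable _ _ (by fun_prop)
    calc _ ≤ ∫ y, (c ^ 2 + (F y - m) ^ 2) ∂(Measure.pi fun _ : Fin N => μ) :=
          integral_mono hint.integral_prod_right ((integrable_const _).add hF2) hpt
      _ ≤ _ := by
          rw [integral_add (integrable_const _) hF2]
          simp only [integral_const, probReal_univ, one_smul]
          push_cast; linarith
end conc

theorem concentration {X : Type*} [MetricSpace X] [CompactSpace X] [Group X] [IsTopologicalGroup X]
    (R : ℝ) (hR : ∀ x y : X, dist x y ≤ R) {ι : Type*} (T : Finset ι) (v : ι → X) (C δ : ℝ)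
    (hC : 0 ≤ C) (hδ : 0 < δ) :
    ∃ N : ℕ, 0 < N ∧ ∀ φ : ι → (Fin N → X) → ℝ,
      (∀ i ∈ T, ∀ g g', |φ i g - φ i g'| ≤ C * ((1 / N) * ∑ k, dist (g k) (g' k))) →
      ∃ g : Fin N → X, ∀ i ∈ T, |φ i (fun k => v i * g k) - φ i g| ≤ δ := by
  let _ : MeasurableSpace X := borel X
  have : BorelSpace X := ⟨rfl⟩
  let μ : Measure X := Measure.haarMeasure ⊤
  have : IsProbabilityMeasure μ := ⟨by
    have := Measure.haarMeasure_self (G := X) (K₀ := ⊤)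
    simpa using this⟩
  obtain ⟨N, hN⟩ := exists_nat_gt (T.card * (4 * (C * R) ^ 2) / δ ^ 2)
  have hN0 : 0 < N := by
    have : (0:ℝ) < N := lt_of_le_of_lt (by positivity) hN
    exact_mod_cast this
  have hN0' : (0:ℝ) < N := by exact_mod_cast hN0
  refine ⟨N, hN0, fun φ hφ => ?_⟩
  have hcont : ∀ i ∈ T, Continuous (φ i) := by
    intro i hi
    rw [continuous_iff_continuousAt]
    intro g
    have h0 : Filter.Tendsto (fun g' : Fin N → X => C * ((1 / N) * ∑ k, dist (g' k) (g k)))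
        (nhds g) (nhds 0) := by
      have : Continuous (fun g' : Fin N → X => C * ((1 / N) * ∑ k, dist (g' k) (g k))) := by
        fun_prop
      simpa using this.tendsto g
    rw [ContinuousAt, tendsto_iff_dist_tendsto_zero]
    exact squeeze_zero (fun _ => dist_nonneg) (fun g' => hφ i hi g' g) h0
  have hbd : ∀ i ∈ T, ∀ g k x, |φ i g - φ i (Function.update g k x)| ≤ C * R / N := by
    intro i hi g k x
    refine (hφ i hi _ _).trans ?_
    have : ∑ j, dist (g j) (Function.update g k x j) ≤ R := by
      rw [Finset.sum_eq_single k]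
      · exact hR _ _
      · intro b _ hb; simp [Function.update_of_ne hb]
      · simp
    calc _ ≤ C * (1 / N * R) := by gcongr
      _ = _ := by ring
  let P := Measure.pi fun _ : Fin N => μ
  let v' : ι → Fin N → X := fun i _ => v i
  have hE : ∀ i ∈ T, Integrable (fun g => (φ i (v' i * g) - φ i g) ^ 2) P ∧
      ∫ g, (φ i (v' i * g) - φ i g) ^ 2 ∂P ≤ 4 * (N * (C * R / N) ^ 2) := by
    intro i hi
    obtain ⟨m, hm⟩ := variance_bound μ (C * R / N) N (φ i) (hcont i hi) (hbd i hi)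
    have hc := hcont i hi
    have i0 : Integrable (fun g => (φ i (v' i * g) - φ i g) ^ 2) P :=
      cont_integrable _ _ (by fun_prop)
    have i1 : Integrable (fun g => (φ i (v' i * g) - m) ^ 2) P :=
      cont_integrable _ _ (by fun_prop)
    have i2 : Integrable (fun g => (φ i g - m) ^ 2) P :=
      cont_integrable _ _ (by fun_prop)
    refine ⟨i0, ?_⟩
    have inv : ∫ g, (φ i (v' i * g) - m) ^ 2 ∂P = ∫ g, (φ i g - m) ^ 2 ∂P :=
      integral_mul_left_eq_self (μ := P) (fun g => (φ i g - m) ^ 2) (v' i)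
    calc _ ≤ ∫ g, (2 * (φ i (v' i * g) - m) ^ 2 + 2 * (φ i g - m) ^ 2) ∂P := by
          refine integral_mono i0 ((i1.const_mul 2).add (i2.const_mul 2)) fun g => ?_
          simp only
          nlinarith [sq_nonneg ((φ i (v' i * g) - m) + (φ i g - m))]
      _ = 4 * ∫ g, (φ i g - m) ^ 2 ∂P := by
          rw [integral_add (i1.const_mul 2) (i2.const_mul 2), integral_const_mul,
            integral_const_mul, inv]; ring
      _ ≤ _ := by
          have : ∫ g, (φ i g - m) ^ 2 ∂P ≤ N * (C * R / N) ^ 2 := hm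
          linarith
  have hint : Integrable (fun g => ∑ i ∈ T, (φ i (v' i * g) - φ i g) ^ 2) P :=
    integrable_finsetSum _ fun i hi => (hE i hi).1
  obtain ⟨g, hg⟩ := exists_le_integral hint
  rw [integral_finsetSum _ fun i hi => (hE i hi).1] at hg
  have h1 : ∑ i ∈ T, (φ i (v' i * g) - φ i g) ^ 2 ≤ δ ^ 2 := by
    refine hg.trans ((Finset.sum_le_sum fun i hi => (hE i hi).2).trans ?_)
    rw [Finset.sum_const, nsmul_eq_mul]
    rw [div_lt_iff₀ (by positivity)] at hN
    have : (T.card : ℝ) * (4 * (N * (C * R / N) ^ 2)) = T.card * (4 * (C * R) ^ 2) / N := by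
      field_simp
    rw [this, div_le_iff₀ hN0']
    linarith
  refine ⟨g, fun i hi => ?_⟩
  have h2 := (Finset.single_le_sum (f := fun i => (φ i (v' i * g) - φ i g) ^ 2)
    (fun _ _ => sq_nonneg _) hi).trans h1
  exact abs_le_of_sq_le_sq h2 hδ.le


theorem exists_isometry (V F : Type*) [NormedAddCommGroup V] [InnerProductSpace ℂ V]
    [FiniteDimensional ℂ V] [NormedAddCommGroup F] [InnerProductSpace ℂ F]
    (hF : ¬ FiniteDimensional ℂ F) : Nonempty (V →ₗᵢ[ℂ] F) := by
  have hle : (Module.finrank ℂ V : Cardinal) ≤ Module.rank ℂ F := by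
    have : Cardinal.aleph0 ≤ Module.rank ℂ F := by
      by_contra h
      exact hF (Module.rank_lt_aleph0_iff.1 (not_le.1 h))
    exact (Cardinal.natCast_lt_aleph0).le.trans this
  obtain ⟨w, hw⟩ := exists_linearIndependent_of_le_rank hle
  have ho := InnerProductSpace.gramSchmidtNormed_orthonormal hw
  let b := stdOrthonormalBasis ℂ V
  let f : V →ₗ[ℂ] F := b.toBasis.constr ℂ (InnerProductSpace.gramSchmidtNormed ℂ w)
  refine ⟨f.isometryOfOrthonormal (v := b.toBasis) (by simp) ?_⟩
  have : f ∘ b.toBasis = InnerProductSpace.gramSchmidtNormed ℂ w := by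
    funext i; exact b.toBasis.constr_basis ℂ _ i
  rw [this]; exact ho

section
variable {H : Type*} [NormedAddCommGroup H] [InnerProductSpace ℂ H] [CompleteSpace H]

theorem exists_T {V : Type*} [NormedAddCommGroup V] [InnerProductSpace ℂ V]
    [FiniteDimensional ℂ V] (hinf : ¬ FiniteDimensional ℂ H) (E : Submodule ℂ H)
    [FiniteDimensional ℂ E] (Δ : E →ₗᵢ[ℂ] V) :
    ∃ T : V →ₗᵢ[ℂ] H, ∀ e : E, T (Δ e) = e := by
  have : CompleteSpace V := FiniteDimensional.complete ℂ V
  have hE : ¬ FiniteDimensional ℂ Eᗮ := by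
    intro h
    apply hinf
    have h1 : E ⊔ Eᗮ = ⊤ := Submodule.sup_orthogonal_of_hasOrthogonalProjection
    have h2 : FiniteDimensional ℂ (E ⊔ Eᗮ : Submodule ℂ H) := inferInstance
    rw [h1] at h2
    exact Module.Finite.equiv (Submodule.topEquiv (R := ℂ) (M := H))
  obtain ⟨S⟩ := exists_isometry V Eᗮ hE
  let D : E →L[ℂ] V := Δ.toContinuousLinearMap
  let A : V →L[ℂ] E := ContinuousLinearMap.adjoint D
  have hAD : ∀ e, A (D e) = e := fun e => by
    have := LinearIsometry.adjoint_comp_self Δ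
    exact congrArg (fun L : E →L[ℂ] E => L e) this
  let T : V →ₗ[ℂ] H := E.subtype ∘ₗ A.toLinearMap +
    Eᗮ.subtype ∘ₗ S.toLinearMap ∘ₗ (LinearMap.id - D.toLinearMap ∘ₗ A.toLinearMap)
  have hT : ∀ x, T x = (A x : H) + (S (x - D (A x)) : H) := fun x => rfl
  refine ⟨⟨T, fun x => ?_⟩, fun e => ?_⟩
  · have h1 : ‖T x‖ ^ 2 = ‖A x‖ ^ 2 + ‖x - D (A x)‖ ^ 2 := by
      have h0 : inner ℂ (A x : H) (S (x - D (A x)) : H) = 0 :=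
        Submodule.inner_right_of_mem_orthogonal (A x).2 (S (x - D (A x))).2
      have := norm_add_sq_eq_norm_sq_add_norm_sq_of_inner_eq_zero _ _ h0
      rw [hT, sq, this, ← S.norm_map (x - D (A x)), sq, sq]; rfl
    have h2 : ‖x‖ ^ 2 = ‖A x‖ ^ 2 + ‖x - D (A x)‖ ^ 2 := by
      have h0 : inner ℂ (D (A x)) (x - D (A x)) = 0 := by
        rw [← ContinuousLinearMap.adjoint_inner_right D]
        change inner ℂ (A x) (A (x - D (A x))) = 0
        rw [map_sub, hAD, sub_self, inner_zero_right]
      have := norm_add_sq_eq_norm_sq_add_norm_sq_of_inner_eq_zero _ _ h0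
      rw [add_sub_cancel] at this
      have h3 : ‖D (A x)‖ = ‖A x‖ := Δ.norm_map _
      rw [sq, this, h3, sq, sq]
    have h3 := h1.trans h2.symm
    exact (sq_eq_sq₀ (norm_nonneg _) (norm_nonneg _)).1 h3
  · change T (D e) = e
    rw [hT, hAD, sub_self, map_zero]; simp

/-- Unitary on `H` induced by unitary on `V` and an isometry `T : V → H`. -/
theorem exists_amp {V : Type*} [NormedAddCommGroup V] [InnerProductSpace ℂ V]
    [CompleteSpace V] (T : V →ₗᵢ[ℂ] H) :
    ∃ ρ : (V ≃ₗᵢ[ℂ] V) →* unitary (H →L[ℂ] H), ∀ D z, (ρ D : H →L[ℂ] H) (T z) = T (D z) := by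
  let t : V →L[ℂ] H := T.toContinuousLinearMap
  let a : H →L[ℂ] V := ContinuousLinearMap.adjoint t
  have hat : ∀ e, a (t e) = e := fun e => by
    have := LinearIsometry.adjoint_comp_self T
    exact congrArg (fun L : V →L[ℂ] V => L e) this
  let A : (V ≃ₗᵢ[ℂ] V) → H →L[ℂ] H := fun D =>
    1 + t ∘L ((D.toContinuousLinearEquiv : V →L[ℂ] V) - 1) ∘L a
  have hA : ∀ D x, A D x = x + t (D (a x) - a x) := fun D x => rfl
  have hmul : ∀ D D', A (D * D') = A D * A D' := by
    intro D D'
    ext x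
    rw [mul_apply_eq_comp, hA, hA D, hA D', map_add a, hat]
    simp only [add_sub_cancel, LinearIsometryEquiv.coe_mul, Function.comp_apply, map_sub]
    abel
  have hone : A 1 = 1 := by
    ext x; rw [hA]; simp
  have hstar : ∀ D, star (A D) = A D⁻¹ := by
    intro D
    rw [ContinuousLinearMap.star_eq_adjoint, eq_comm, ContinuousLinearMap.eq_adjoint_iff]
    intro x y
    rw [hA, hA, inner_add_left, inner_add_right]
    congr 1
    rw [← ContinuousLinearMap.adjoint_inner_right t, ← ContinuousLinearMap.adjoint_inner_left t]
    change inner ℂ (D⁻¹ (a x) - a x) (a y) = inner ℂ (a x) (D (a y) - a y)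
    rw [inner_sub_left, inner_sub_right]
    congr 1
    rw [← D.inner_map_map]
    congr 1
    exact D.apply_symm_apply _
  refine ⟨{ toFun := fun D => ⟨A D, ?_⟩, map_one' := Subtype.ext hone,
            map_mul' := fun D D' => Subtype.ext (hmul D D') }, fun D z => ?_⟩
  · rw [Unitary.mem_iff, hstar, ← hmul, ← hmul]
    simp [hone]
  · change A D (t z) = t (D z)
    rw [hA, hat, map_sub]; abel

theorem exists_rep (hinf : ¬ FiniteDimensional ℂ H) (E : Submodule ℂ H)
    [FiniteDimensional ℂ E] (N : ℕ) (hN : 0 < N) :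
    ∃ ρ : (Fin N → unitary (E →L[ℂ] E)) →* unitary (H →L[ℂ] H),
      (∀ (v : unitary (E →L[ℂ] E)) (ξ : E),
        (ρ (fun _ => v) : H →L[ℂ] H) ξ = ((v : E →L[ℂ] E) ξ : E)) ∧
      ∀ g g' (ξ : E), ‖(ρ g : H →L[ℂ] H) ξ - (ρ g' : H →L[ℂ] H) ξ‖ ^ 2 =
        (1 / N) * ∑ k, ‖(g k : E →L[ℂ] E) ξ - (g' k : E →L[ℂ] E) ξ‖ ^ 2 := by
  have hN0 : (0:ℝ) < N := by exact_mod_cast hN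
  let r : ℂ := ((√N)⁻¹ : ℝ)
  have hr : ‖r‖ ^ 2 = 1 / N := by
    simp only [r, Complex.norm_real, Real.norm_eq_abs, sq_abs, inv_pow, Real.sq_sqrt hN0.le,
      one_div]
  let V := PiLp 2 (fun _ : Fin N => E)
  let Δl : E →ₗ[ℂ] V :=
    { toFun := fun e => WithLp.toLp 2 (fun _ => r • e)
      map_add' := fun x y => by ext k; exact congrArg Subtype.val (smul_add r x y)
      map_smul' := fun c x => by ext k; exact congrArg Subtype.val (smul_comm r c x) }
  let Δ : E →ₗᵢ[ℂ] V := ⟨Δl, fun e => by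
    refine (sq_eq_sq₀ (norm_nonneg _) (norm_nonneg _)).1 ?_
    rw [PiLp.norm_sq_eq_of_L2]
    simp only [Δl, LinearMap.coe_mk, AddHom.coe_mk, norm_smul, mul_pow, hr, Finset.sum_const,
      Finset.card_univ, Fintype.card_fin, nsmul_eq_mul]
    field_simp⟩
  obtain ⟨T, hT⟩ := exists_T hinf E Δ
  obtain ⟨ρ, hρ⟩ := exists_amp T
  let D : (Fin N → unitary (E →L[ℂ] E)) →* (V ≃ₗᵢ[ℂ] V) :=
    { toFun := fun g => LinearIsometryEquiv.piLpCongrRight 2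
        (fun k => Unitary.linearIsometryEquiv (g k))
      map_one' := by ext x k; simp
      map_mul' := fun g h => by ext x k; simp }
  have hD : ∀ g (ξ : E) k, D g (Δ ξ) k = r • (g k : E →L[ℂ] E) ξ := fun g ξ k => by
    change (g k : E →L[ℂ] E) (r • ξ) = _
    rw [map_smul]
  refine ⟨ρ.comp D, fun v ξ => ?_, fun g g' ξ => ?_⟩
  · rw [MonoidHom.comp_apply]
    conv_lhs => rw [← hT ξ]
    rw [hρ, ← hT]
    congr 1
    ext k; rw [hD]; rfl
  · rw [MonoidHom.comp_apply, MonoidHom.comp_apply, ← hT ξ, hρ, hρ, ← map_sub, T.norm_map,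
      PiLp.norm_sq_eq_of_L2, Finset.mul_sum]
    refine Finset.sum_congr rfl fun k _ => ?_
    rw [WithLp.ofLp_sub, Pi.sub_apply, hD, hD, ← smul_sub, norm_smul, mul_pow, hr]

end

section
variable (E : Type*) [NormedAddCommGroup E] [InnerProductSpace ℂ E] [FiniteDimensional ℂ E]
  [CompleteSpace E]

theorem unitary_norm_le (u : unitary (E →L[ℂ] E)) : ‖(u : E →L[ℂ] E)‖ ≤ 1 := by
  refine ContinuousLinearMap.opNorm_le_bound _ zero_le_one fun x => ?_
  rw [one_mul]
  exact ((Unitary.linearIsometryEquiv u).norm_map x).le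

theorem unitary_compact : CompactSpace (unitary (E →L[ℂ] E)) := by
  have : ProperSpace (E →L[ℂ] E) := FiniteDimensional.proper ℂ _
  refine isCompact_iff_compactSpace.1 (?_ : IsCompact (unitary (E →L[ℂ] E) : Set (E →L[ℂ] E)))
  refine Metric.isCompact_of_isClosed_isBounded isClosed_unitary ?_
  refine Metric.isBounded_closedBall (x := (0 : E →L[ℂ] E)) (r := 1) |>.subset ?_
  intro u hu
  rw [mem_closedBall_zero_iff]
  exact unitary_norm_le E ⟨u, hu⟩

theorem unitary_topgroup : IsTopologicalGroup (unitary (E →L[ℂ] E)) := inferInstance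

theorem unitary_dist_le (u v : unitary (E →L[ℂ] E)) : dist u v ≤ 2 := by
  rw [Subtype.dist_eq, dist_eq_norm]
  refine (norm_sub_le _ _).trans ?_
  linarith [unitary_norm_le E u, unitary_norm_le E v]

theorem unitary_dist_inv (u v : unitary (E →L[ℂ] E)) : dist u⁻¹ v⁻¹ = dist u v := by
  rw [Subtype.dist_eq, Subtype.dist_eq, dist_eq_norm, dist_eq_norm]
  change ‖star (u : E →L[ℂ] E) - star (v : E →L[ℂ] E)‖ = _
  rw [← star_sub, norm_star]
end

section
variable {H : Type*} [NormedAddCommGroup H] [InnerProductSpace ℂ H] [CompleteSpace H]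

theorem ext_unitary (E F : Submodule ℂ H) [FiniteDimensional ℂ E] (hFE : F ≤ E)
    (u : unitary (H →L[ℂ] H)) (hu : ∀ x ∈ F, (u : H →L[ℂ] H) x ∈ E) :
    ∃ v : unitary (E →L[ℂ] E), ∀ x : E, (x : H) ∈ F →
      (((v : E →L[ℂ] E) x : E) : H) = (u : H →L[ℂ] H) x := by
  let F' : Submodule ℂ E := F.comap E.subtype
  let L : F' →ₗᵢ[ℂ] E :=
    ⟨((u : H →L[ℂ] H).toLinearMap ∘ₗ E.subtype ∘ₗ F'.subtype).codRestrict E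
      (fun x => hu _ x.2), fun x => (Unitary.linearIsometryEquiv u).norm_map _⟩
  let A : E ≃ₗᵢ[ℂ] E := L.extend.toLinearIsometryEquiv rfl
  refine ⟨Unitary.linearIsometryEquiv.symm A, fun x hx => ?_⟩
  have h : L.extend x = L ⟨x, hx⟩ := L.extend_apply ⟨x, hx⟩
  exact congrArg Subtype.val h

theorem core (hinf : ¬ FiniteDimensional ℂ H) {K : Type*} [TopologicalSpace K] [CompactSpace K]
    [Nonempty K] [MulAction (unitary (H →L[ℂ] H)) K]
    (hu : ∀ f : C(K, ℝ), ∃ S : Finset H, ∃ δ : ℝ, 0 < δ ∧ ∀ u : unitary (H →L[ℂ] H),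
      (∀ ξ ∈ S, ‖(u : H →L[ℂ] H) ξ - ξ‖ < δ) → ∀ y : K, |f (u • y) - f y| ≤ 1 / 8)
    (T : Finset (C(K, ℝ) × unitary (H →L[ℂ] H))) :
    ∃ y : K, ∀ p ∈ T, |p.1 (p.2 • y) - p.1 y| ≤ 1 := by
  classical
  choose S δ hδ h using hu
  let S' : Finset H := T.biUnion fun p => S p.1
  have hS' : ∀ p ∈ T, ∀ ξ ∈ S p.1, ξ ∈ S' := fun p hp ξ hξ => Finset.mem_biUnion.2 ⟨p, hp, hξ⟩
  obtain ⟨δ', hδ'0, hδ'⟩ : ∃ δ' : ℝ, 0 < δ' ∧ ∀ p ∈ T, δ' ≤ δ p.1 := by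
    clear hS' S'
    induction T using Finset.induction_on with
    | empty => exact ⟨1, one_pos, by simp⟩
    | insert a s _ ih =>
      obtain ⟨d, hd, hd'⟩ := ih
      refine ⟨min d (δ a.1), lt_min hd (hδ _), fun p hp => ?_⟩
      rcases Finset.mem_insert.1 hp with rfl | hp
      · exact min_le_right _ _
      · exact (min_le_left _ _).trans (hd' p hp)
  let M : ℝ := 1 + ∑ ξ ∈ S', ‖ξ‖
  have hM0 : 0 < M := by positivity
  have hM : ∀ ξ ∈ S', ‖ξ‖ ≤ M := fun ξ hξ => by
    have := Finset.single_le_sum (f := fun ξ : H => ‖ξ‖) (fun _ _ => norm_nonneg _) hξ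
    simp only [M]; linarith
  let B : ℝ := ∑ p ∈ T, ‖p.1‖
  have hB0 : 0 ≤ B := by positivity
  have hB : ∀ p ∈ T, ∀ y, |p.1 y| ≤ B := fun p hp y =>
    (p.1.norm_coe_le_norm y).trans
      (Finset.single_le_sum (f := fun p : C(K, ℝ) × unitary (H →L[ℂ] H) => ‖p.1‖)
        (fun _ _ => norm_nonneg _) hp)
  let S'' : Finset H := S' ∪ T.biUnion fun p =>
    S'.image fun ξ => ((p.2⁻¹ : unitary (H →L[ℂ] H)) : H →L[ℂ] H) ξ
  let E : Submodule ℂ H := Submodule.span ℂ (S'' : Set H)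
  let F : Submodule ℂ H := Submodule.span ℂ (S' : Set H)
  have hfd : FiniteDimensional ℂ E := FiniteDimensional.span_finset ℂ S''
  have hSE : ∀ ξ ∈ S', ξ ∈ E := fun ξ hξ =>
    Submodule.subset_span (Finset.mem_coe.2 (Finset.mem_union_left _ hξ))
  have hFE : F ≤ E := Submodule.span_le.2 hSE
  have hv : ∀ p : C(K, ℝ) × unitary (H →L[ℂ] H), ∃ v : unitary (E →L[ℂ] E), p ∈ T →
      ∀ x : E, (x : H) ∈ S' →
        (((v⁻¹ : unitary (E →L[ℂ] E)) : E →L[ℂ] E) x : H) =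
          ((p.2⁻¹ : unitary (H →L[ℂ] H)) : H →L[ℂ] H) x := by
    intro p
    by_cases hp : p ∈ T
    · have hmem : ∀ x ∈ F, ((p.2⁻¹ : unitary (H →L[ℂ] H)) : H →L[ℂ] H) x ∈ E := by
        have : F ≤ E.comap ((p.2⁻¹ : unitary (H →L[ℂ] H)) : H →L[ℂ] H).toLinearMap := by
          refine Submodule.span_le.2 fun ξ hξ => ?_
          refine Submodule.subset_span (Finset.mem_coe.2 (Finset.mem_union_right _ ?_))
          exact Finset.mem_biUnion.2 ⟨p, hp, Finset.mem_image.2 ⟨ξ, hξ, rfl⟩⟩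
        exact this
      obtain ⟨v, hv⟩ := ext_unitary E F hFE _ hmem
      refine ⟨v⁻¹, fun _ x hx => ?_⟩
      rw [inv_inv]
      exact hv x (Submodule.subset_span hx)
    · exact ⟨1, fun h => absurd h hp⟩
  choose v hv using hv
  have : CompactSpace (unitary (E →L[ℂ] E)) := unitary_compact E
  let η : ℝ := δ' ^ 2 / (4 * M ^ 2)
  have hη : 0 < η := by positivity
  have : @IsTopologicalGroup (unitary (E →L[ℂ] E))
      _ _ := unitary_topgroup E
  obtain ⟨N, hN, hconc⟩ := concentration (X := unitary (E →L[ℂ] E)) 2 (unitary_dist_le E) T v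
    (2 * B / η) (1 / 8) (by positivity) (by norm_num)
  obtain ⟨ρ, hρ1, hρ2⟩ := exists_rep hinf E N hN
  have hN0 : (0:ℝ) < N := by exact_mod_cast hN
  obtain ⟨x₀⟩ := ‹Nonempty K›
  let D : (Fin N → unitary (E →L[ℂ] E)) → (Fin N → unitary (E →L[ℂ] E)) → ℝ :=
    fun g g' => (1 / N) * ∑ k, dist (g k) (g' k)
  have hnorm : ∀ (u : unitary (H →L[ℂ] H)) x, ‖(u : H →L[ℂ] H) x‖ = ‖x‖ := fun u x =>
    (Unitary.linearIsometryEquiv u).norm_map x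
  have hmulinv : ∀ (u : unitary (H →L[ℂ] H)) x,
      (u : H →L[ℂ] H) (((u⁻¹ : unitary (H →L[ℂ] H)) : H →L[ℂ] H) x) = x := fun u x => by
    have : ((u * u⁻¹ : unitary (H →L[ℂ] H)) : H →L[ℂ] H) x = x := by rw [mul_inv_cancel]; rfl
    exact this
  have hunif : ∀ p ∈ T, ∀ g g', D g g' ≤ η →
      |p.1 (ρ g • x₀) - p.1 (ρ g' • x₀)| ≤ 1 / 8 := by
    intro p hp g g' hD
    have := h p.1 (ρ g * (ρ g')⁻¹) (fun ξ hξ => ?_) (ρ g' • x₀)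
    · rwa [smul_smul, inv_mul_cancel_right] at this
    have hξ' := hS' p hp ξ hξ
    refine lt_of_lt_of_le ?_ (hδ' p hp)
    have e1 : ((ρ g * (ρ g')⁻¹ : unitary (H →L[ℂ] H)) : H →L[ℂ] H) ξ - ξ =
        (ρ g : H →L[ℂ] H) ((ρ g'⁻¹ : H →L[ℂ] H) ξ - (ρ g⁻¹ : H →L[ℂ] H) ξ) := by
      rw [map_sub, map_inv, map_inv, hmulinv]; rfl
    rw [e1, hnorm]
    refine lt_of_pow_lt_pow_left₀ 2 hδ'0.le ?_
    rw [hρ2 g'⁻¹ g⁻¹ ⟨ξ, hSE ξ hξ'⟩]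
    have e2 : ∀ k, ‖((g'⁻¹ k : unitary (E →L[ℂ] E)) : E →L[ℂ] E) ⟨ξ, hSE ξ hξ'⟩ -
        ((g⁻¹ k : unitary (E →L[ℂ] E)) : E →L[ℂ] E) ⟨ξ, hSE ξ hξ'⟩‖ ^ 2 ≤
        2 * M ^ 2 * dist (g k) (g' k) := by
      intro k
      have d1 : ‖((g'⁻¹ k : unitary (E →L[ℂ] E)) : E →L[ℂ] E) ⟨ξ, hSE ξ hξ'⟩ -
        ((g⁻¹ k : unitary (E →L[ℂ] E)) : E →L[ℂ] E) ⟨ξ, hSE ξ hξ'⟩‖ ≤ dist (g k) (g' k) * M := by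
        rw [← ContinuousLinearMap.sub_apply]
        refine (ContinuousLinearMap.le_opNorm _ _).trans ?_
        refine mul_le_mul ?_ (hM ξ hξ') (norm_nonneg _) dist_nonneg
        rw [← unitary_dist_inv, dist_comm, Subtype.dist_eq, dist_eq_norm]
        rfl
      have d2 := unitary_dist_le E (g k) (g' k)
      have d0 : 0 ≤ dist (g k) (g' k) := dist_nonneg
      calc _ ≤ (dist (g k) (g' k) * M) ^ 2 := by gcongr
        _ = dist (g k) (g' k) * (dist (g k) (g' k) * M ^ 2) := by ring
        _ ≤ 2 * (dist (g k) (g' k) * M ^ 2) := by gcongr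
        _ = _ := by ring
    calc _ ≤ (1 / (N : ℝ)) * ∑ k, 2 * M ^ 2 * dist (g k) (g' k) := by
          gcongr with k; exact e2 _
      _ = 2 * M ^ 2 * D g g' := by rw [← Finset.mul_sum]; simp only [D]; ring
      _ ≤ 2 * M ^ 2 * η := by gcongr
      _ = δ' ^ 2 / 2 := by simp only [η]; field_simp; norm_num
      _ < δ' ^ 2 := half_lt_self (by positivity)
  have happ : ∀ p : C(K, ℝ) × unitary (H →L[ℂ] H), ∃ φ : (Fin N → unitary (E →L[ℂ] E)) → ℝ,
      p ∈ T → (∀ g, |φ g - p.1 (ρ g • x₀)| ≤ 1 / 8) ∧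
        ∀ g g', |φ g - φ g'| ≤ 2 * B / η * D g g' := by
    intro p
    by_cases hp : p ∈ T
    · obtain ⟨φ, hφ⟩ := lip_approx D (fun x => by simp [D]) (fun x y => by positivity)
        (fun x y => by simp only [D, dist_comm])
        (fun x y z => by
          simp only [D]
          rw [← mul_add, ← Finset.sum_add_distrib]
          gcongr
          exact dist_triangle _ _ _)
        (fun g => p.1 (ρ g • x₀)) B η (1 / 8) hη (by norm_num) (fun g => hB p hp _) (hunif p hp)
      exact ⟨φ, fun _ => hφ⟩
    · exact ⟨0, fun h => absurd h hp⟩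
  choose φ hφ using happ
  obtain ⟨g, hg⟩ := hconc φ (fun p hp => (hφ p hp).2)
  refine ⟨ρ g • x₀, fun p hp => ?_⟩
  have h1 := abs_le.1 (hg p hp)
  have h2 := abs_le.1 ((hφ p hp).1 g)
  have h3 := abs_le.1 ((hφ p hp).1 (fun k => v p * g k))
  have e : ρ (fun k => v p * g k) = ρ (fun _ => v p) * ρ g := by rw [← map_mul]; rfl
  have h4 := h p.1 (p.2 * (ρ (fun _ => v p))⁻¹) (fun ξ hξ => by
    have hξ' := hS' p hp ξ hξ
    have : ((p.2 * (ρ (fun _ => v p))⁻¹ : unitary (H →L[ℂ] H)) : H →L[ℂ] H) ξ = ξ := by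
      change (p.2 : H →L[ℂ] H) ((((ρ (fun _ => v p))⁻¹ : unitary (H →L[ℂ] H)) : H →L[ℂ] H) ξ) = ξ
      have e3 : (ρ (fun _ => v p))⁻¹ = ρ (fun _ => (v p)⁻¹) := by rw [← map_inv]; rfl
      have e4 := hρ1 (v p)⁻¹ ⟨ξ, hSE ξ hξ'⟩
      rw [e3, e4, hv p hp _ hξ', hmulinv]
    rw [this, sub_self, norm_zero]
    exact hδ _) (ρ (fun k => v p * g k) • x₀)
  rw [smul_smul, e, ← mul_assoc, inv_mul_cancel_right, ← smul_smul] at h4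
  rw [e] at h3
  rw [abs_le] at h4 ⊢
  have h1' : φ p (fun k => v p * g k) = φ p (fun k => v p * g k) := rfl
  rw [← smul_smul] at h3 h4
  constructor <;> linarith [h1.1, h1.2, h2.1, h2.2, h3.1, h3.2, h4.1, h4.2]

theorem sot_nhds (W : Set (unitary (H →L[ℂ] H)))
    (hW : W ∈ @nhds _ (TopologicalSpace.induced
        (fun (u : unitary (H →L[ℂ] H)) => fun (x : H) => (u : H →L[ℂ] H) x)
        Pi.topologicalSpace) 1) :
    ∃ S : Finset H, ∃ δ : ℝ, 0 < δ ∧ ∀ u : unitary (H →L[ℂ] H),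
      (∀ ξ ∈ S, ‖(u : H →L[ℂ] H) ξ - ξ‖ < δ) → u ∈ W := by
  rw [nhds_induced, Filter.mem_comap] at hW
  obtain ⟨t, ht, htW⟩ := hW
  rw [nhds_pi, Filter.mem_pi] at ht
  obtain ⟨I, hI, s, hs, hst⟩ := ht
  have hs' : ∀ ξ : H, ∃ r : ℝ, 0 < r ∧ Metric.ball ξ r ⊆ s ξ := fun ξ => by
    obtain ⟨r, hr, h⟩ := Metric.mem_nhds_iff.1 (hs ξ)
    exact ⟨r, hr, h⟩
  choose r hr hrs using hs'
  obtain ⟨d, hd, hd'⟩ : ∃ d : ℝ, 0 < d ∧ ∀ ξ ∈ hI.toFinset, d ≤ r ξ := by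
    classical
    induction hI.toFinset using Finset.induction_on with
    | empty => exact ⟨1, one_pos, by simp⟩
    | insert a s _ ih =>
      obtain ⟨d, hd, hd'⟩ := ih
      refine ⟨min d (r a), lt_min hd (hr _), fun p hp => ?_⟩
      rcases Finset.mem_insert.1 hp with rfl | hp
      · exact min_le_right _ _
      · exact (min_le_left _ _).trans (hd' p hp)
  refine ⟨hI.toFinset, d, hd, fun u hu => htW (hst fun ξ hξ => hrs ξ ?_)⟩
  have hξ' := hI.mem_toFinset.2 hξ
  rw [Metric.mem_ball, dist_eq_norm]
  exact (hu ξ hξ').trans_le (hd' ξ hξ')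

end
end GM


/-- **Gromov–Milman**: the unitary group of a separable infinite-dimensional complex Hilbert
space, equipped with the strong operator topology (the topology of pointwise convergence,
induced by the inclusion into `H → H` with the product of norm topologies), is extremely
amenable. -/
theorem gromov_milman_unitary_extremelyAmenable
    (H : Type) [NormedAddCommGroup H] [InnerProductSpace ℂ H] [CompleteSpace H]
    [TopologicalSpace.SeparableSpace H] (hinf : ¬ FiniteDimensional ℂ H) :
    letI : TopologicalSpace (unitary (H →L[ℂ] H)) :=
      TopologicalSpace.induced
        (fun (u : unitary (H →L[ℂ] H)) => fun (x : H) => (u : H →L[ℂ] H) x)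
        Pi.topologicalSpace
    ExtremelyAmenable (unitary (H →L[ℂ] H)) := by
  intro K _ _ _ _ _ hcs
  let τ : TopologicalSpace (unitary (H →L[ℂ] H)) :=
      TopologicalSpace.induced
        (fun (u : unitary (H →L[ℂ] H)) => fun (x : H) => (u : H →L[ℂ] H) x)
        Pi.topologicalSpace
  have hcs' : @ContinuousSMul (unitary (H →L[ℂ] H)) K _ τ _ := hcs
  have hu : ∀ f : C(K, ℝ), ∃ S : Finset H, ∃ δ : ℝ, 0 < δ ∧ ∀ u : unitary (H →L[ℂ] H),
      (∀ ξ ∈ S, ‖(u : H →L[ℂ] H) ξ - ξ‖ < δ) → ∀ y : K, |f (u • y) - f y| ≤ 1 / 8 := by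
    intro f
    let n : Set (unitary (H →L[ℂ] H) × K) := {p | |f (p.1 • p.2) - f p.2| < 1 / 8}
    have hn : @IsOpen _ (@instTopologicalSpaceProd _ _ τ _) n := by
      refine @isOpen_lt _ _ _ _ _ (@instTopologicalSpaceProd _ _ τ _) _ _ ?_ ?_
      · have h1 : @Continuous _ _ (@instTopologicalSpaceProd _ _ τ _) _
            (fun p : unitary (H →L[ℂ] H) × K => f (p.1 • p.2)) :=
          f.continuous.comp continuous_smul
        have h2 : @Continuous _ _ (@instTopologicalSpaceProd _ _ τ _) _
            (fun p : unitary (H →L[ℂ] H) × K => f p.2) :=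
          f.continuous.comp (@continuous_snd _ _ τ _)
        exact (h1.sub h2).abs
      · exact continuous_const
    obtain ⟨U, V, hU, _, h1U, hV, hUV⟩ := @generalized_tube_lemma _ _ τ _ {1}
      (@isCompact_singleton _ τ _) Set.univ isCompact_univ n hn (by
        rintro ⟨a, b⟩ ⟨ha, -⟩
        have ha' : a = 1 := ha
        subst ha'
        simp [n])
    obtain ⟨S, δ, hδ, h⟩ := GM.sot_nhds U
      ((@IsOpen.mem_nhds_iff _ τ 1 U hU).2 (h1U rfl))
    refine ⟨S, δ, hδ, fun u hu y => ?_⟩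
    have : (u, y) ∈ n := hUV ⟨h u hu, hV trivial⟩
    exact le_of_lt this
  have hcont : ∀ u : unitary (H →L[ℂ] H), Continuous fun y : K => u • y := fun u =>
    (@continuous_smul _ _ _ τ _ hcs').comp
      ((@Continuous.prodMk _ _ _ τ _ _ _ _ (@continuous_const _ _ _ τ u) continuous_id))
  have hne : (⋂ p : C(K, ℝ) × unitary (H →L[ℂ] H),
      {y : K | |p.1 (p.2 • y) - p.1 y| ≤ 1}).Nonempty := by
    refine CompactSpace.iInter_nonempty (fun p => ?_) (fun T => ?_)
    · refine isClosed_le ?_ continuous_const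
      exact ((p.1.continuous.comp (hcont p.2)).sub p.1.continuous).abs
    · obtain ⟨y, hy⟩ := GM.core hinf hu T
      exact ⟨y, Set.mem_iInter₂.2 hy⟩
  obtain ⟨y, hy⟩ := hne
  refine ⟨y, fun g => ?_⟩
  by_contra hg
  obtain ⟨f, hf0, hf1, -⟩ := exists_continuous_zero_one_of_isClosed (X := K)
    (isClosed_singleton (x := y)) (isClosed_singleton (x := g • y))
    (Set.disjoint_singleton.2 (Ne.symm hg))
  have h0 : f y = 0 := hf0 rfl
  have h1 : f (g • y) = 1 := hf1 rfl
  have h2 := Set.mem_iInter.1 hy ((2 : ℝ) • f, g)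
  simp only [Set.mem_setOf_eq, ContinuousMap.smul_apply, h0, h1] at h2
  norm_num at h2
end
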